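/- arXiv:1011.2769 — 2 statements merged into one kernel-verified Lean document; each statement's English description precedes it below -/
import Mathlib

section
/- Let n ≥ 3 be a prime number and let ζ_n = exp(2πi/n). Then R(U_n) = ℤ[ζ_n], the subring of ℂ generated by ζ_n. -/
/-- The antisymmetric bracket `⟨x,y⟩ = x·conj(y) − conj(x)·y`. -/
noncomputable def sbr (x y : ℂ) : ℂ :=
  x * (starRingEnd ℂ) y - (starRingEnd ℂ) x * y

/-- The intersection point `I_{u,v}(p,q)` of the lines `L_u(p)` and `L_v(q)`. -/
noncomputable def Iop (u v p q : ℂ) : ℂ :=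
  (sbr u p / sbr u v) * v + (sbr v q / sbr v u) * u

/-- `origamiPts U` is the smallest subset of `ℂ` containing `0` and `1` that is
closed under `(p,q) ↦ I_{u,v}(p,q)` for all `u, v ∈ U` with `u ≠ ±v`.  This is `R(U)`. -/
inductive origamiPts (U : Set ℂ) : ℂ → Prop
  | zero : origamiPts U 0
  | one : origamiPts U 1
  | inter {u v : ℂ} (hu : u ∈ U) (hv : v ∈ U) (huv : u ≠ v) (huv' : u ≠ -v)
      {p q : ℂ} (hp : origamiPts U p) (hq : origamiPts U q) :
      origamiPts U (Iop u v p q)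


open ComplexConjugate in
lemma sbr_ne {n : ℕ} (hn : 0 < n) {u v : ℂ} (hu : u ^ (2 * n) = 1) (hv : v ^ (2 * n) = 1)
    (h : u ≠ v) (h' : u ≠ -v) : u ≠ 0 ∧ v ≠ 0 ∧ conj u = u⁻¹ ∧ conj v = v⁻¹ ∧
      sbr u v = (u ^ 2 - v ^ 2) / (u * v) ∧ u ^ 2 - v ^ 2 ≠ 0 ∧ sbr u v ≠ 0 := by
  have key : ∀ x : ℂ, x ^ (2 * n) = 1 → x ≠ 0 ∧ conj x = x⁻¹ := by
    intro x hx
    have h1 : ‖x‖ = 1 := Complex.norm_eq_one_of_pow_eq_one hx (by omega)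
    refine ⟨by rintro rfl; simp at h1, ?_⟩
    exact (Complex.inv_eq_conj h1).symm
  obtain ⟨hu0, huc⟩ := key u hu
  obtain ⟨hv0, hvc⟩ := key v hv
  have h3 : u ^ 2 - v ^ 2 ≠ 0 := by
    intro h0
    rcases sq_eq_sq_iff_eq_or_eq_neg.mp (sub_eq_zero.mp h0) with h1 | h1
    · exact h h1
    · exact h' h1
  have h4 : sbr u v = (u ^ 2 - v ^ 2) / (u * v) := by
    unfold sbr
    rw [huc, hvc]
    field_simp
  refine ⟨hu0, hv0, huc, hvc, h4, h3, ?_⟩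
  rw [h4]
  exact div_ne_zero h3 (mul_ne_zero hu0 hv0)

lemma sbr_swap (u v : ℂ) : sbr v u = - sbr u v := by
  unfold sbr; ring

lemma Iop_alt (u v p q : ℂ) :
    Iop u v p q = (sbr u p * v - sbr v q * u) / sbr u v := by
  unfold Iop
  rw [sbr_swap u v, div_neg]
  ring

open ComplexConjugate in
lemma Iop_eq {u v p q z a b : ℂ} (h : sbr u v ≠ 0) (ha : conj a = a) (hb : conj b = b)
    (h1 : z = p + a * u) (h2 : z = q + b * v) : Iop u v p q = z := by
  have hp : p = z - a * u := by rw [h1]; ring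
  have hq : q = z - b * v := by rw [h2]; ring
  rw [Iop_alt, div_eq_iff h, hp, hq]
  unfold sbr
  simp only [map_sub, map_mul, ha, hb]
  ring

lemma Iop_add {u v : ℂ} (p q t : ℂ) (h : sbr u v ≠ 0) :
    Iop u v (p + t) (q + t) = Iop u v p q + t := by
  rw [Iop_alt, Iop_alt, div_add' _ _ _ h]
  congr 1
  unfold sbr
  simp only [map_add]
  ring

open ComplexConjugate in
lemma Iop_mul {c : ℂ} (u v p q : ℂ) (hc : c * conj c = 1) :
    Iop (c * u) (c * v) (c * p) (c * q) = c * Iop u v p q := by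
  have h : ∀ x y, sbr (c * x) (c * y) = sbr x y := by
    intro x y
    unfold sbr
    simp only [map_mul]
    linear_combination (x * conj y - conj x * y) * hc
  unfold Iop
  rw [h, h, h, h]
  ring

open ComplexConjugate in
lemma forward_aux {n : ℕ} (hn : 3 ≤ n) (hp : n.Prime) {ζ : ℂ} (hζ : IsPrimitiveRoot ζ n)
    {s t p : ℂ} (hs : s ^ n = 1) (ht : t ^ n = 1) (hst : s - t ≠ 0)
    (hpA : p ∈ Subring.closure {ζ}) :
    (s * conj p - p) * t / (s - t) ∈ Subring.closure {ζ} := by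
  have hn0 : n ≠ 0 := by omega
  have : NeZero n := ⟨hn0⟩
  have hζA : ζ ∈ Subring.closure {ζ} := Subring.subset_closure rfl
  have rootA : ∀ x : ℂ, x ^ n = 1 → x ∈ Subring.closure {ζ} := by
    intro x hx
    obtain ⟨i, _, rfl⟩ := hζ.eq_pow_of_pow_eq_one hx
    exact pow_mem hζA i
  have ht0 : t ≠ 0 := by rintro rfl; simp [hn0] at ht
  obtain ⟨w, hw⟩ : ∃ w, w = s / t := ⟨_, rfl⟩
  have hsw : s = w * t := by rw [hw]; field_simp
  have hwn : w ^ n = 1 := by rw [hw, div_pow, hs, ht, div_one]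
  have hw1 : w ≠ 1 := by rintro rfl; apply hst; rw [hsw]; ring
  have hwp : IsPrimitiveRoot w n := by
    have := Fact.mk hp
    have := IsPrimitiveRoot.orderOf w
    rwa [orderOf_eq_prime hwn hw1] at this
  have hwA := rootA w hwn
  have root1 : ∀ x : ℂ, x ^ n = 1 → ∃ a ∈ Subring.closure {ζ}, x - 1 = (w - 1) * a := by
    intro x hx
    obtain ⟨i, _, rfl⟩ := hwp.eq_pow_of_pow_eq_one hx
    exact ⟨_, sum_mem fun k _ => pow_mem hwA k, (mul_geom_sum w i).symm⟩
  have hcζ : (conj ζ) ^ n = 1 := by rw [← map_pow, hζ.pow_eq_one, map_one]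
  have key : conj p ∈ Subring.closure {ζ} ∧
      ∃ a ∈ Subring.closure {ζ}, conj p - p = (w - 1) * a := by
    induction hpA using Subring.closure_induction with
    | mem x hx =>
      rw [Set.mem_singleton_iff] at hx
      subst hx
      obtain ⟨a, ha, ha'⟩ := root1 _ hcζ
      obtain ⟨b, hb, hb'⟩ := root1 _ hζ.pow_eq_one
      exact ⟨rootA _ hcζ, a - b, sub_mem ha hb, by linear_combination ha' - hb'⟩
    | zero => exact ⟨by simp, 0, by simp, by simp⟩
    | one => exact ⟨by simp, 0, by simp, by simp⟩
    | add x y hx hy ihx ihy =>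
      obtain ⟨hx1, a, ha, ha'⟩ := ihx
      obtain ⟨hy1, b, hb, hb'⟩ := ihy
      refine ⟨by rw [map_add]; exact add_mem hx1 hy1, a + b, add_mem ha hb, ?_⟩
      rw [map_add]; linear_combination ha' + hb'
    | neg x hx ihx =>
      obtain ⟨hx1, a, ha, ha'⟩ := ihx
      refine ⟨by rw [map_neg]; exact neg_mem hx1, -a, neg_mem ha, ?_⟩
      rw [map_neg]; linear_combination -ha'
    | mul x y hx hy ihx ihy =>
      obtain ⟨hx1, a, ha, ha'⟩ := ihx
      obtain ⟨hy1, b, hb, hb'⟩ := ihy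
      refine ⟨by rw [map_mul]; exact mul_mem hx1 hy1, a * conj y + x * b,
        add_mem (mul_mem ha hy1) (mul_mem hx hb), ?_⟩
      rw [map_mul]; linear_combination conj y * ha' + x * hb'
  obtain ⟨hc, a, ha, ha'⟩ := key
  obtain ⟨b, hb, hb'⟩ := root1 s hs
  have : (s * conj p - p) * t / (s - t) = b * conj p + a := by
    rw [div_eq_iff hst]
    have e : s - t = (w - 1) * t := by rw [hsw]; ring
    rw [e]
    linear_combination t * conj p * hb' + t * ha'
  rw [this]
  exact add_mem (mul_mem hb hc) ha

open ComplexConjugate in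
lemma forward {n : ℕ} (hn : 3 ≤ n) (hp : n.Prime) {ζ : ℂ} (hζ : IsPrimitiveRoot ζ n)
    {z : ℂ} (hz : origamiPts {w : ℂ | w ^ (2 * n) = 1} z) : z ∈ Subring.closure {ζ} := by
  induction hz with
  | zero => exact zero_mem _
  | one => exact one_mem _
  | @inter u v hu hv h h' p q _ _ ihp ihq =>
    obtain ⟨hu0, hv0, huc, hvc, e, h3, h4⟩ := sbr_ne (by omega) hu hv h h'
    have hu2 : (u ^ 2) ^ n = 1 := by rw [← pow_mul]; exact hu
    have hv2 : (v ^ 2) ^ n = 1 := by rw [← pow_mul]; exact hv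
    have h3' : v ^ 2 - u ^ 2 ≠ 0 := by rw [← neg_sub]; exact neg_ne_zero.mpr h3
    have m1 := forward_aux hn hp hζ hu2 hv2 h3 ihp
    have m2 := forward_aux hn hp hζ hv2 hu2 h3' ihq
    have : Iop u v p q = (u ^ 2 * conj p - p) * v ^ 2 / (u ^ 2 - v ^ 2) +
        (v ^ 2 * conj q - q) * u ^ 2 / (v ^ 2 - u ^ 2) := by
      rw [Iop_alt, e, ← neg_sub (u ^ 2) (v ^ 2), div_neg]
      unfold sbr
      rw [huc, hvc]
      field_simp
      ring
    rw [this]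
    exact add_mem m1 m2

open ComplexConjugate in
lemma backward {n : ℕ} (hn : 3 ≤ n) (hp : n.Prime) {ζ : ℂ} (hζ : IsPrimitiveRoot ζ n)
    {z : ℂ} (hz : z ∈ Subring.closure {ζ}) : origamiPts {w : ℂ | w ^ (2 * n) = 1} z := by
  have hodd : Odd n := hp.odd_of_ne_two (by omega)
  obtain ⟨m, hm⟩ := hodd
  obtain ⟨w, hw⟩ : ∃ w, w = ζ ^ (m + 1) := ⟨_, rfl⟩
  have hwn : w ^ n = 1 := by rw [hw, ← pow_mul, mul_comm, pow_mul, hζ.pow_eq_one, one_pow]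
  have hw2 : w ^ 2 = ζ := by
    rw [hw, ← pow_mul, show (m + 1) * 2 = n + 1 by omega, pow_succ, hζ.pow_eq_one, one_mul]
  have hz1 : ζ ≠ 1 := hζ.ne_one (by omega)
  have hw1 : w ≠ 1 := by rintro h; apply hz1; rw [← hw2, h, one_pow]
  have hwm1 : w ≠ -1 := by rintro h; apply hz1; rw [← hw2, h]; norm_num
  have hzm1 : ζ ≠ -1 := by
    intro h
    have := hζ.pow_eq_one
    rw [h, Odd.neg_one_pow ⟨m, hm⟩] at this
    norm_num at this
  have hw0 : w ≠ 0 := by rintro rfl; simp [show n ≠ 0 by omega] at hwn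
  have hwU : w ∈ {w : ℂ | w ^ (2 * n) = 1} := by
    show w ^ (2 * n) = 1
    rw [mul_comm, pow_mul, hwn, one_pow]
  have hzU : ζ ∈ {w : ℂ | w ^ (2 * n) = 1} := by
    show ζ ^ (2 * n) = 1
    rw [mul_comm, pow_mul, hζ.pow_eq_one, one_pow]
  have hoU : (1 : ℂ) ∈ {w : ℂ | w ^ (2 * n) = 1} := by simp
  have hzw : ζ ≠ w := by
    intro h; rw [← hw2] at h; apply hw1
    apply mul_left_cancel₀ hw0; linear_combination h
  have hzw' : ζ ≠ -w := by
    intro h; rw [← hw2] at h; apply hwm1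
    apply mul_left_cancel₀ hw0; linear_combination h
  have n0 : 0 < n := by omega
  obtain ⟨_, _, hzc, hwc, _, _, s1⟩ := sbr_ne n0 hzU hwU hzw hzw'
  have c1 : (1 : ℂ) ≠ -ζ := by intro h; apply hzm1; linear_combination h
  have c2 : (1 : ℂ) ≠ -w := by intro h; apply hwm1; linear_combination h
  obtain ⟨_, _, _, _, _, _, s2⟩ := sbr_ne n0 hoU hzU hz1.symm c1
  obtain ⟨_, _, _, _, _, _, s3⟩ := sbr_ne n0 hoU hwU hw1.symm c2
  have hr : conj (w + w⁻¹) = w + w⁻¹ := by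
    rw [map_add, map_inv₀, hwc, inv_inv, add_comm]
  have hrw : (w + w⁻¹) * w = 1 + ζ := by rw [← hw2]; field_simp; ring
  -- the point `-ζ`
  have R1 : origamiPts {w : ℂ | w ^ (2 * n) = 1} (-ζ) := by
    have := origamiPts.inter hzU hwU hzw hzw' (.zero) (.one)
    rwa [Iop_eq (z := -ζ) (a := -1) (b := -(w + w⁻¹)) s1 (by simp) (by rw [map_neg, hr])
      (by ring) (by linear_combination hrw)] at this
  have R2 : origamiPts {w : ℂ | w ^ (2 * n) = 1} (1 - ζ) := by
    have := origamiPts.inter hoU hzU hz1.symm c1 R1 (.one)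
    rwa [Iop_eq (z := 1 - ζ) (a := 1) (b := -1) s2 (by simp) (by simp)
      (by ring) (by ring)] at this
  have R3 : origamiPts {w : ℂ | w ^ (2 * n) = 1} 2 := by
    have := origamiPts.inter hoU hwU hw1.symm c2 (.zero) R2
    rwa [Iop_eq (z := 2) (a := 2) (b := w + w⁻¹) s3 (Complex.conj_ofNat 2) hr
      (by ring) (by linear_combination -hrw)] at this
  have trans : ∀ t, origamiPts {w : ℂ | w ^ (2 * n) = 1} t →
      origamiPts {w : ℂ | w ^ (2 * n) = 1} (1 + t) →
      ∀ p, origamiPts {w : ℂ | w ^ (2 * n) = 1} p →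
        origamiPts {w : ℂ | w ^ (2 * n) = 1} (p + t) := by
    intro t h0 h1 p h
    induction h with
    | zero => rwa [zero_add]
    | one => exact h1
    | @inter u v hu hv h h' p q _ _ ihp ihq =>
      obtain ⟨_, _, _, _, _, _, s⟩ := sbr_ne n0 hu hv h h'
      rw [← Iop_add p q t s]
      exact .inter hu hv h h' ihp ihq
  have add1 := trans 1 .one (by norm_num; exact R3)
  have addR : ∀ p t, origamiPts {w : ℂ | w ^ (2 * n) = 1} p →
      origamiPts {w : ℂ | w ^ (2 * n) = 1} t →
      origamiPts {w : ℂ | w ^ (2 * n) = 1} (p + t) := by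
    intro p t h h'
    exact trans t h' (by rw [add_comm]; exact add1 t h') p h
  have mulU : ∀ c : ℂ, c ^ (2 * n) = 1 → origamiPts {w : ℂ | w ^ (2 * n) = 1} c →
      ∀ p, origamiPts {w : ℂ | w ^ (2 * n) = 1} p →
        origamiPts {w : ℂ | w ^ (2 * n) = 1} (c * p) := by
    intro c hc hcR p h
    have hcc : c * conj c = 1 := by
      have h1 : ‖c‖ = 1 := Complex.norm_eq_one_of_pow_eq_one hc (by omega)
      rw [Complex.mul_conj, Complex.normSq_eq_norm_sq, h1]; simp
    have hc0 : c ≠ 0 := by rintro rfl; simp at hcc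
    induction h with
    | zero => rw [mul_zero]; exact .zero
    | one => rwa [mul_one]
    | @inter u v hu hv h h' p q _ _ ihp ihq =>
      rw [← Iop_mul u v p q hcc]
      refine .inter ?_ ?_ ?_ ?_ ihp ihq
      · show (c * u) ^ (2 * n) = 1
        rw [mul_pow, hc, one_mul]; exact hu
      · show (c * v) ^ (2 * n) = 1
        rw [mul_pow, hc, one_mul]; exact hv
      · intro e; exact h (mul_left_cancel₀ hc0 e)
      · intro e; rw [← mul_neg] at e; exact h' (mul_left_cancel₀ hc0 e)
  have hmz : (-ζ) ^ (2 * n) = 1 := by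
    rw [Even.neg_pow ⟨n, by ring⟩]; exact hzU
  have powR : ∀ k : ℕ, origamiPts {w : ℂ | w ^ (2 * n) = 1} ((-ζ) ^ k) := by
    intro k
    induction k with
    | zero => rw [pow_zero]; exact .one
    | succ k ih => rw [pow_succ']; exact mulU _ hmz R1 _ ih
  have Rneg : origamiPts {w : ℂ | w ^ (2 * n) = 1} (-1) := by
    have := powR n
    rwa [Odd.neg_pow ⟨m, hm⟩, hζ.pow_eq_one] at this
  have negR : ∀ p, origamiPts {w : ℂ | w ^ (2 * n) = 1} p →
      origamiPts {w : ℂ | w ^ (2 * n) = 1} (-p) := by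
    intro p h
    have := mulU (-1) (by simp) Rneg p h
    rwa [neg_one_mul] at this
  have fin : ∀ r, origamiPts {w : ℂ | w ^ (2 * n) = 1} r →
      origamiPts {w : ℂ | w ^ (2 * n) = 1} (z * r) := by
    induction hz using Subring.closure_induction with
    | mem x hx =>
      rw [Set.mem_singleton_iff] at hx
      subst hx
      intro r hr
      have := negR _ (mulU _ hmz R1 r hr)
      rwa [neg_mul, neg_neg] at this
    | zero => intro r _; rw [zero_mul]; exact .zero
    | one => intro r hr; rwa [one_mul]
    | add x y hx hy ihx ihy =>
      intro r hr; rw [add_mul]; exact addR _ _ (ihx r hr) (ihy r hr)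
    | neg x hx ihx => intro r hr; rw [neg_mul]; exact negR _ (ihx r hr)
    | mul x y hx hy ihx ihy => intro r hr; rw [mul_assoc]; exact ihx _ (ihy r hr)
  have := fin 1 .one
  rwa [mul_one] at this

/-- For a prime `n ≥ 3`, `R(U_n) = ℤ[ζ_n]`, the subring of `ℂ` generated by
`ζ_n = exp(2πi/n)`.  Here `U_n` is the group of `2n`-th roots of unity in `ℂ`. -/
theorem stmt_17 (n : ℕ) (hn : 3 ≤ n) (hp : n.Prime) :
    {z : ℂ | origamiPts {w : ℂ | w ^ (2 * n) = 1} z} =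
      (Subring.closure {Complex.exp (2 * Real.pi * Complex.I / n)} : Set ℂ) := by
  have hζ := Complex.isPrimitiveRoot_exp n (by omega)
  ext z
  exact ⟨fun h => forward hn hp hζ h, fun h => backward hn hp hζ h⟩
end

section
/- Let n ≥ 4 be a composite integer and let ζ_n = exp(2πi/n). Then R(U_n) = ℤ[1/n, ζ_n], the subring of ℂ generated by ζ_n and 1/n. -/
open ComplexConjugate in
lemma aux_conj (n : ℕ) (hn : 4 ≤ n) {u : ℂ} (hu : u ^ n = 1) : conj u = u⁻¹ := by
  have h : ‖u‖ = 1 := Complex.norm_eq_one_of_pow_eq_one hu (by omega)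
  exact (Complex.inv_eq_conj h).symm

open ComplexConjugate in
lemma aux_Iop (n : ℕ) (hn : 4 ≤ n) {u v : ℂ} (hu : u ^ (2 * n) = 1) (hv : v ^ (2 * n) = 1)
    (h1 : u ≠ v) (h2 : u ≠ -v) (p q : ℂ) :
    u ^ 2 ≠ v ^ 2 ∧ Iop u v p q =
      (u ^ 2 * v ^ 2 * (conj p - conj q) - v ^ 2 * p + u ^ 2 * q) / (u ^ 2 - v ^ 2) := by
  have hne : u ^ 2 ≠ v ^ 2 := by
    intro h
    rcases sq_eq_sq_iff_eq_or_eq_neg.1 h with h | h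
    · exact h1 h
    · exact h2 h
  have hu0 : u ≠ 0 := by
    rintro rfl
    rw [zero_pow (by omega)] at hu
    exact zero_ne_one hu
  have hv0 : v ≠ 0 := by
    rintro rfl
    rw [zero_pow (by omega)] at hv
    exact zero_ne_one hv
  have hd : u ^ 2 - v ^ 2 ≠ 0 := sub_ne_zero.2 hne
  refine ⟨hne, ?_⟩
  have cu := aux_conj (2 * n) (by omega) hu
  have cv := aux_conj (2 * n) (by omega) hv
  have e1 : sbr u v = (u ^ 2 - v ^ 2) / (u * v) := by
    unfold sbr; rw [cu, cv]; field_simp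
  have e2 : sbr v u = -((u ^ 2 - v ^ 2) / (u * v)) := by
    unfold sbr; rw [cu, cv]; field_simp; try ring
  have e3 : sbr u p = (u ^ 2 * conj p - p) / u := by
    unfold sbr; rw [cu]; field_simp
  have e4 : sbr v q = (v ^ 2 * conj q - q) / v := by
    unfold sbr; rw [cv]; field_simp
  unfold Iop
  rw [e1, e2, e3, e4]
  field_simp
  ring

/-- The origami set. -/
def RR (n : ℕ) (z : ℂ) : Prop := origamiPts {w : ℂ | w ^ (2 * n) = 1} z

open ComplexConjugate in
lemma RR_inter (n : ℕ) (hn : 4 ≤ n) {a b p q : ℂ} (ha : a ^ n = 1) (hb : b ^ n = 1)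
    (hab : a ≠ b) (hp : RR n p) (hq : RR n q) :
    RR n ((a * b * (conj p - conj q) - b * p + a * q) / (a - b)) := by
  obtain ⟨u, rfl⟩ := IsAlgClosed.exists_pow_nat_eq a (n := 2) (by norm_num)
  obtain ⟨v, rfl⟩ := IsAlgClosed.exists_pow_nat_eq b (n := 2) (by norm_num)
  rw [← pow_mul] at ha hb
  have h1 : u ≠ v := by rintro rfl; exact hab rfl
  have h2 : u ≠ -v := by rintro rfl; exact hab (by ring)
  rw [← (aux_Iop n hn ha hb h1 h2 p q).2]
  exact origamiPts.inter (U := {w : ℂ | w ^ (2 * n) = 1}) ha hb h1 h2 hp hq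

/-- Intersection with the line through zero. -/
lemma RR_inter' (n : ℕ) (hn : 4 ≤ n) {a b p q x : ℂ} (ha : a ^ n = 1) (hb : b ^ n = 1)
    (hab : a ≠ b) (hp : RR n p) (hq : RR n q)
    (hx : a * b * (starRingEnd ℂ p - starRingEnd ℂ q) - b * p + a * q = x * (a - b)) : RR n x := by
  have := RR_inter n hn ha hb hab hp hq
  rwa [hx, mul_div_cancel_right₀ _ (sub_ne_zero.2 hab)] at this

open ComplexConjugate in
lemma RR_induct (n : ℕ) (hn : 4 ≤ n) {P : ℂ → Prop} (h0 : P 0) (h1 : P 1)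
    (h : ∀ a b p q : ℂ, a ^ n = 1 → b ^ n = 1 → a ≠ b → RR n p → RR n q → P p → P q →
      P ((a * b * (conj p - conj q) - b * p + a * q) / (a - b))) {x : ℂ} (hx : RR n x) : P x := by
  induction hx with
  | zero => exact h0
  | one => exact h1
  | @inter u v hu hv huv huv' p q hp hq ihp ihq =>
    obtain ⟨hne, he⟩ := aux_Iop n hn hu hv huv huv' p q
    rw [he]
    exact h _ _ _ _ (by rw [← pow_mul]; exact hu) (by rw [← pow_mul]; exact hv) hne hp hq ihp ihq

open ComplexConjugate in
lemma RR_affine (n : ℕ) (hn : 4 ≤ n) {s t c : ℂ} (hc : c ^ n = 1) (ht : t = c * conj t)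
    (hs : RR n s) (hst : RR n (s + t)) {x : ℂ} (hx : RR n x) : RR n (s + t * x) := by
  have hc0 : c ≠ 0 := by
    rintro rfl
    rw [zero_pow (by omega)] at hc
    exact zero_ne_one hc
  refine RR_induct n hn (P := fun x => RR n (s + t * x)) (by simpa using hs) (by simpa using hst)
    ?_ hx
  intro a b p q ha hb hab _ _ hp hq
  refine RR_inter' n hn (a := c * a) (b := c * b) (by rw [mul_pow, hc, ha, one_mul])
    (by rw [mul_pow, hc, hb, one_mul]) (fun h => hab (mul_left_cancel₀ hc0 h)) hp hq ?_
  have hd := sub_ne_zero.2 hab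
  simp only [map_add, map_mul]
  have : (s + t * ((a * b * (conj p - conj q) - b * p + a * q) / (a - b))) * (c * a - c * b)
    = c * (s * (a - b) + t * (a * b * (conj p - conj q) - b * p + a * q)) := by
    field_simp
  rw [this]
  linear_combination (-(c * a * b * (conj p - conj q))) * ht

lemma aux_inv_sub (n : ℕ) (hn : 4 ≤ n) {z : ℂ} (hz : IsPrimitiveRoot z n) (S : Subring ℂ)
    (hzS : z ∈ S) (hnS : ((n : ℂ))⁻¹ ∈ S) {c : ℂ} (hc : c ^ n = 1) (hc1 : c ≠ 1) :
    (1 - c)⁻¹ ∈ S := by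
  obtain ⟨m, rfl⟩ : ∃ m, n = m + 1 := ⟨n - 1, by omega⟩
  obtain ⟨k, hk, rfl⟩ := hz.eq_pow_of_pow_eq_one hc
  have hk0 : k ≠ 0 := by rintro rfl; simp at hc1
  have hp := hz.prod_one_sub_pow_eq_order
  obtain ⟨j, rfl⟩ : ∃ j, k = j + 1 := ⟨k - 1, by omega⟩
  have hj : j ∈ Finset.range m := by simp; omega
  rw [← Finset.mul_prod_erase _ _ hj] at hp
  have hne : (1 : ℂ) - z ^ (j + 1) ≠ 0 := sub_ne_zero.2 (Ne.symm hc1)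
  have hn0 : ((m + 1 : ℕ) : ℂ) ≠ 0 := by exact_mod_cast Nat.succ_ne_zero m
  have : (1 - z ^ (j + 1))⁻¹ =
      ((m + 1 : ℕ) : ℂ)⁻¹ * ∏ x ∈ (Finset.range m).erase j, (1 - z ^ (x + 1)) := by
    rw [inv_eq_iff_eq_inv, mul_inv, inv_inv]
    push_cast
    rw [← hp]
    have : ∏ x ∈ (Finset.range m).erase j, (1 - z ^ (x + 1)) ≠ 0 := by
      intro h
      rw [h, mul_zero] at hp
      push_cast at hn0
      exact hn0 hp.symm
    field_simp
  rw [this]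
  exact S.mul_mem hnS (S.prod_mem fun i _ => S.sub_mem S.one_mem (S.pow_mem hzS _))

lemma aux_root_mem (n : ℕ) (hn : 4 ≤ n) {z : ℂ} (hz : IsPrimitiveRoot z n) (S : Subring ℂ)
    (hzS : z ∈ S) {c : ℂ} (hc : c ^ n = 1) : c ∈ S := by
  have : NeZero n := ⟨by omega⟩
  obtain ⟨k, hk, rfl⟩ := hz.eq_pow_of_pow_eq_one hc
  exact S.pow_mem hzS _

lemma part_one (n : ℕ) (hn : 4 ≤ n) {z : ℂ} (hz : IsPrimitiveRoot z n) (S : Subring ℂ)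
    (hzS : z ∈ S) (hnS : ((n : ℂ))⁻¹ ∈ S) {x : ℂ} (hx : RR n x) : x ∈ S := by
  have key : x ∈ S ∧ starRingEnd ℂ x ∈ S := by
    have main : ∀ a b p q p' q' : ℂ, a ^ n = 1 → b ^ n = 1 → a ≠ b → p ∈ S → q ∈ S → p' ∈ S →
        q' ∈ S → (a * b * (p' - q') - b * p + a * q) / (a - b) ∈ S := by
      intro a b p q p' q' ha hb hab hp hq hp' hq'
      have ha0 : a ≠ 0 := by
        rintro rfl
        rw [zero_pow (by omega)] at ha
        exact zero_ne_one ha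
      have hai : (a⁻¹) ^ n = 1 := by rw [inv_pow, ha, inv_one]
      have haS := aux_root_mem n hn hz S hzS ha
      have hbS := aux_root_mem n hn hz S hzS hb
      have haiS := aux_root_mem n hn hz S hzS hai
      have h1 : (1 - b * a⁻¹)⁻¹ ∈ S := by
        refine aux_inv_sub n hn hz S hzS hnS (by rw [mul_pow, hb, hai, one_mul]) ?_
        intro h
        apply hab
        field_simp at h
        exact h.symm
      have h2 : (a - b)⁻¹ = a⁻¹ * (1 - b * a⁻¹)⁻¹ := by
        rw [← mul_inv]; congr 1; field_simp
      rw [div_eq_mul_inv, h2]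
      exact S.mul_mem (S.add_mem (S.sub_mem (S.mul_mem (S.mul_mem haS hbS) (S.sub_mem hp' hq'))
        (S.mul_mem hbS hp)) (S.mul_mem haS hq)) (S.mul_mem haiS h1)
    refine RR_induct n hn (P := fun x => x ∈ S ∧ starRingEnd ℂ x ∈ S) (by simp [S.zero_mem])
      (by simp [S.one_mem]) ?_ hx
    rintro a b p q ha hb hab _ _ ⟨hp, hp'⟩ ⟨hq, hq'⟩
    refine ⟨main _ _ _ _ _ _ ha hb hab hp hq hp' hq', ?_⟩
    simp only [map_div₀, map_add, map_sub, map_mul, Complex.conj_conj]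
    refine main _ _ _ _ _ _ ?_ ?_ ?_ hp' hq' hp hq
    · rw [← map_pow, ha, map_one]
    · rw [← map_pow, hb, map_one]
    · intro h; exact hab ((starRingEnd ℂ).injective h)
  exact key.1

open ComplexConjugate in
lemma RR_basic (n : ℕ) (hn : 4 ≤ n) {z : ℂ} (hz : IsPrimitiveRoot z n) :
    RR n z ∧ RR n (-1) ∧ RR n 2 := by
  have hz1 := hz.pow_eq_one
  have cz := aux_conj n hn hz1
  have hz0 : z ≠ 0 := hz.ne_zero (by omega)
  have hne1 : z ≠ 1 := hz.ne_one (by omega)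
  have hne2 : z ^ 2 ≠ 1 := hz.pow_ne_one_of_pos_of_lt (by norm_num) (by omega)
  have hz2 : (z ^ 2) ^ n = 1 := by rw [← pow_mul, mul_comm, pow_mul, hz1, one_pow]
  have h0 : RR n 0 := origamiPts.zero
  have h1 : RR n 1 := origamiPts.one
  have hne3 : z ≠ z ^ 2 := by
    intro h
    apply hne1
    apply mul_left_cancel₀ hz0
    rw [mul_one, ← sq]
    exact h.symm
  have h1z : RR n (1 + z) := by
    refine RR_inter' n hn hz1 hz2 hne3 h0 h1 ?_
    simp; try ring
  have hzR : RR n z := by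
    refine RR_inter' n hn (one_pow n) hz2 (Ne.symm hne2) h1z h0 ?_
    simp [cz]; field_simp; try ring
  have hm1 : RR n (-1) := by
    refine RR_inter' n hn hz1 (one_pow n) hne1 hzR h0 ?_
    simp [cz]; field_simp; try ring
  have hmz : RR n (-z) := by
    have := RR_affine n hn (s := 0) (t := -1) (c := 1) (one_pow n) (by simp) h0
      (by simpa using hm1) hzR
    simpa using this
  have h1mz : RR n (1 - z) := by
    refine RR_inter' n hn hz2 (one_pow n) hne2 h1 hmz ?_
    simp [cz]; field_simp; try ring
  refine ⟨hzR, hm1, ?_⟩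
  refine RR_inter' n hn hz1 (one_pow n) hne1 h1mz h0 ?_
  simp [cz]; field_simp; try ring

lemma RR_neg (n : ℕ) (hn : 4 ≤ n) {z : ℂ} (hz : IsPrimitiveRoot z n) {x : ℂ} (hx : RR n x) :
    RR n (-x) := by
  have := RR_affine n hn (s := 0) (t := -1) (c := 1) (one_pow n) (by simp) origamiPts.zero
    (by simpa using (RR_basic n hn hz).2.1) hx
  simpa using this

lemma RR_add (n : ℕ) (hn : 4 ≤ n) {z : ℂ} (hz : IsPrimitiveRoot z n) {x y : ℂ} (hx : RR n x)
    (hy : RR n y) : RR n (x + y) := by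
  have h1 : RR n (1 + 1 * x) := RR_affine n hn (s := 1) (t := 1) (c := 1) (one_pow n) (by simp)
    origamiPts.one (by rw [one_add_one_eq_two]; exact (RR_basic n hn hz).2.2) hx
  have := RR_affine n hn (s := x) (t := 1) (c := 1) (one_pow n) (by simp) hx
    (by rw [one_mul, add_comm] at h1; exact h1) hy
  simpa using this

open ComplexConjugate in
lemma RR_proj_mul (n : ℕ) (hn : 4 ≤ n) {a b p y : ℂ} (ha : a ^ n = 1) (hb : b ^ n = 1)
    (hab : a ≠ b) (hp : RR n p) (hy : RR n y) :
    RR n ((a * b * conj p - b * p) / (a - b) * y) := by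
  have hR : RR n ((a * b * conj p - b * p) / (a - b)) := by
    have := RR_inter n hn ha hb hab hp origamiPts.zero
    simpa using this
  have ha0 : a ≠ 0 := by
    rintro rfl
    rw [zero_pow (by omega)] at ha
    exact zero_ne_one ha
  have hb0 : b ≠ 0 := by
    rintro rfl
    rw [zero_pow (by omega)] at hb
    exact zero_ne_one hb
  have := RR_affine n hn (s := 0) (t := (a * b * conj p - b * p) / (a - b)) (c := b) hb
    (by
      have hd := sub_ne_zero.2 hab
      have hd' := sub_ne_zero.2 (Ne.symm hab)
      have e : a⁻¹ - b⁻¹ = (b - a) / (a * b) := by field_simp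
      simp only [map_div₀, map_sub, map_mul, Complex.conj_conj, aux_conj n hn ha,
        aux_conj n hn hb]
      rw [e]
      field_simp
      ring) origamiPts.zero (by simpa using hR) hy
  simpa using this

lemma RR_mul (n : ℕ) (hn : 4 ≤ n) {z : ℂ} (hz : IsPrimitiveRoot z n) {x y : ℂ} (hx : RR n x)
    (hy : RR n y) : RR n (x * y) := by
  refine RR_induct n hn (P := fun x => RR n (x * y))
    (by rw [zero_mul]; exact origamiPts.zero)
    (by simpa using hy) ?_ hx
  intro a b p q ha hb hab hp hq _ _
  have h1 := RR_proj_mul n hn ha hb hab hp hy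
  have h2 := RR_proj_mul n hn hb ha hab.symm hq hy
  have := RR_add n hn hz h1 h2
  convert this using 1
  have hd := sub_ne_zero.2 hab
  have hd' := sub_ne_zero.2 (Ne.symm hab)
  rw [← neg_sub a b, div_neg]
  field_simp
  ring

/-- The origami ring. -/
def RS (n : ℕ) (hn : 4 ≤ n) {z : ℂ} (hz : IsPrimitiveRoot z n) : Subring ℂ where
  carrier := {x | RR n x}
  mul_mem' := fun hx hy => RR_mul n hn hz hx hy
  one_mem' := origamiPts.one
  add_mem' := fun hx hy => RR_add n hn hz hx hy
  zero_mem' := origamiPts.zero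
  neg_mem' := fun hx => RR_neg n hn hz hx

lemma part_two (n : ℕ) (hn : 4 ≤ n) (hnp : ¬ n.Prime) {z : ℂ} (hz : IsPrimitiveRoot z n) :
    RR n ((n : ℂ))⁻¹ := by
  have hzS : z ∈ RS n hn hz := (RR_basic n hn hz).1
  change ((n : ℂ))⁻¹ ∈ RS n hn hz
  have hRS : ∀ x, x ∈ RS n hn hz ↔ RR n x := fun x => Iff.rfl
  have hassoc : ∀ b c : ℂ, b ^ n = 1 → c ^ n = 1 → c ≠ 1 →
      (1 - b) / (1 - c) ∈ RS n hn hz := by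
    intro b c hb hc hc1
    have hb0 : b ≠ 0 := by
      rintro rfl
      rw [zero_pow (by omega)] at hb
      exact zero_ne_one hb
    have hc0 : c ≠ 0 := by
      rintro rfl
      rw [zero_pow (by omega)] at hc
      exact zero_ne_one hc
    rw [hRS]
    have hd : 1 - c ≠ 0 := sub_ne_zero.2 (Ne.symm hc1)
    refine RR_inter' n hn (a := b / c) (b := b) (p := 0) (q := 1) (by rw [div_pow, hb, hc, div_one])
      hb ?_ origamiPts.zero origamiPts.one ?_
    · intro h
      apply hc1
      field_simp at h
      exact h.symm
    · simp
      field_simp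
      ring
  generalize RS n hn hz = S at *
  -- factorization
  obtain ⟨m, hmn, hm2, hmlt⟩ := Nat.exists_dvd_of_not_prime2 (by omega) hnp
  obtain ⟨k, rfl⟩ := hmn
  have hk0 : k ≠ 0 := by rintro rfl; omega
  have hw : IsPrimitiveRoot (z ^ k) m := hz.pow (by omega) (mul_comm _ _)
  have hw1 : z ^ k ≠ 1 := hw.ne_one (by omega)
  have hzm : z ^ m ≠ 1 := hz.pow_ne_one_of_pos_of_lt (by omega) hmlt
  have hprod := hw.pow_sub_pow_eq_prod_sub_mul 1 z (by omega)
  have hz1 := hz.pow_eq_one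
  have memroots : ∀ w ∈ Polynomial.nthRootsFinset m (1 : ℂ), w ^ (m * k) = 1 := by
    intro w hw
    rw [Polynomial.mem_nthRootsFinset (by omega)] at hw
    rw [pow_mul, hw, one_pow]
  have hm1 : (1 : ℂ) ∈ Polynomial.nthRootsFinset m (1 : ℂ) := by
    rw [Polynomial.mem_nthRootsFinset (by omega), one_pow]
  have hmw : z ^ k ∈ (Polynomial.nthRootsFinset m (1 : ℂ)).erase 1 := by
    rw [Finset.mem_erase, Polynomial.mem_nthRootsFinset (by omega)]
    exact ⟨hw1, hw.pow_eq_one⟩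
  rw [one_pow, ← Finset.mul_prod_erase _ _ hm1, ← Finset.mul_prod_erase _ _ hmw, one_mul] at hprod
  have hT : ∏ x ∈ ((Polynomial.nthRootsFinset m (1 : ℂ)).erase 1).erase (z ^ k), (1 - x * z) ∈ S := by
    refine S.prod_mem fun w hw => S.sub_mem S.one_mem (S.mul_mem ?_ hzS)
    exact aux_root_mem _ hn hz S hzS
      (memroots w (Finset.mem_of_mem_erase (Finset.mem_of_mem_erase hw)))
  set T := ∏ x ∈ ((Polynomial.nthRootsFinset m (1 : ℂ)).erase 1).erase (z ^ k), (1 - x * z)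
  have hne : (1 : ℂ) - z ^ m ≠ 0 := sub_ne_zero.2 (Ne.symm hzm)
  have hpm : (z ^ m) ^ (m * k) = 1 := by rw [← pow_mul, mul_comm, pow_mul, hz1, one_pow]
  have hpk : (z ^ k * z) ^ (m * k) = 1 := by
    rw [mul_pow, hz1, mul_one, pow_right_comm, hz1, one_pow]
  have hkz : 1 - z ^ k * z ≠ 0 := by
    intro h
    rw [h] at hprod
    simp at hprod
    exact hne hprod
  have hinv : (1 - z ^ k * z)⁻¹ ∈ S := by
    have : (1 - z ^ k * z)⁻¹ = T * ((1 - z) / (1 - z ^ m)) := by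
      rw [inv_eq_iff_eq_inv]
      refine eq_inv_of_mul_eq_one_left ?_
      rw [← mul_div_assoc, ← mul_div_assoc, div_eq_one_iff_eq hne, hprod]
      ring
    rw [this]
    exact S.mul_mem hT (hassoc _ _ hz1 hpm hzm)
  have hall : ∀ c : ℂ, c ^ (m * k) = 1 → c ≠ 1 → (1 - c)⁻¹ ∈ S := by
    intro c hc hc1
    have hd : 1 - c ≠ 0 := sub_ne_zero.2 (Ne.symm hc1)
    have := S.mul_mem hinv (hassoc _ _ hpk hc hc1)
    convert this using 1
    field_simp
  generalize m * k = n at *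
  obtain ⟨l, rfl⟩ : ∃ l, n = l + 1 := ⟨n - 1, by omega⟩
  have hp := hz.prod_one_sub_pow_eq_order
  push_cast
  rw [← hp, ← Finset.prod_inv_distrib]
  refine S.prod_mem fun i hi => hall _ ?_ ?_
  · rw [← pow_mul, mul_comm, pow_mul, hz1, one_pow]
  · exact hz.pow_ne_one_of_pos_of_lt (by omega) (by simp at hi; omega)

/-- For a composite `n ≥ 4`, `R(U_n) = ℤ[1/n, ζ_n]`, the subring of `ℂ` generated by
`ζ_n = exp(2πi/n)` and `1/n`.  Here `U_n` is the group of `2n`-th roots of unity in `ℂ`. -/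
theorem stmt_18 (n : ℕ) (hn : 4 ≤ n) (hnp : ¬ n.Prime) :
    {z : ℂ | origamiPts {w : ℂ | w ^ (2 * n) = 1} z} =
      (Subring.closure {Complex.exp (2 * Real.pi * Complex.I / n), ((n : ℂ))⁻¹} : Set ℂ) := by
  have hz := Complex.isPrimitiveRoot_exp n (by omega)
  apply Set.Subset.antisymm
  · intro x hx
    exact part_one n hn hz _ (Subring.subset_closure (by simp)) (Subring.subset_closure (by simp)) hx
  · have : Subring.closure {Complex.exp (2 * Real.pi * Complex.I / n), ((n : ℂ))⁻¹} ≤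
        RS n hn hz := by
      rw [Subring.closure_le]
      rintro x (rfl | rfl)
      · exact (RR_basic n hn hz).1
      · exact part_two n hn hnp hz
    exact this
end
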